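/- The Fourier transform of x ↦ exp(⟨x,h⟩_{i}) exp(−t Q(x)) P(x) on R^{2d} (with Q positive definite, t > 0, P polynomial, ⟨·,·⟩ the imaginary pairing) equals p ↦ t^{−d} π^{d} Disc(Q)^{−1/2} exp(−(π²/t) Q^∨(p+h)) P̂(p), where P̂ is a polynomial of the same degree as P; in particular for P = 1, the Gaussian e^{−tQ(x)} transforms to t^{−d}π^{d}Disc(Q)^{−1/2} e^{−(π²/t)Q^∨(p)}. -/

import Mathlib

open Real Matrix MeasureTheory

noncomputable section

/-- The positive definite quadratic form `Q(x) = xᵀMx` on `ℝ^{2d}`. -/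
def Qform (n : ℕ) (M : Matrix (Fin n) (Fin n) ℝ) (x : Fin n → ℝ) : ℝ :=
  x ⬝ᵥ M.mulVec x

/-- The dual quadratic form `Q^∨(y) = yᵀM⁻¹y / (4π²)` with respect to the
purely imaginary pairing used in the Fourier transform. -/
def Qdual (n : ℕ) (M : Matrix (Fin n) (Fin n) ℝ) (y : Fin n → ℝ) : ℝ :=
  (1 / (4 * π ^ 2)) * (y ⬝ᵥ M⁻¹.mulVec y)

end


/-- Hermite-type polynomials. -/
noncomputable def hermH : ℕ → Polynomial ℂ
  | 0 => 1
  | 1 => Polynomial.C (Complex.I / 2) * Polynomial.X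
  | (n + 2) => Polynomial.C (Complex.I / 2) * Polynomial.X * hermH (n + 1)
      + Polynomial.C (((n : ℂ) + 1) / 2) * hermH n

lemma hermH_spec (n : ℕ) :
    (hermH n).natDegree ≤ n ∧ (hermH n).coeff n = (Complex.I / 2) ^ n := by
  induction n using hermH.induct with
  | case1 => simp [hermH]
  | case2 =>
    refine ⟨?_, by simp [hermH]⟩
    rw [hermH]
    exact (Polynomial.natDegree_C_mul_le _ _).trans (by simp)
  | case3 n ih1 ih0 =>
    constructor
    · rw [hermH]
      refine (Polynomial.natDegree_add_le _ _).trans (max_le ?_ ?_)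
      · rw [mul_assoc]
        refine (Polynomial.natDegree_C_mul_le _ _).trans
          ((Polynomial.natDegree_mul_le).trans ?_)
        have := ih1.1
        simp; omega
      · refine (Polynomial.natDegree_C_mul_le _ _).trans ?_
        have := ih0.1
        omega
    · rw [hermH, Polynomial.coeff_add, mul_assoc, Polynomial.coeff_C_mul, Polynomial.coeff_C_mul,
        Polynomial.coeff_X_mul, ih1.2,
        Polynomial.coeff_eq_zero_of_natDegree_lt (p := hermH n) (by have := ih0.1; omega)]
      change _ = (Complex.I / 2) ^ (n + 2)
      ring

/-- 1D integrand. -/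
noncomputable def gInt (q : ℝ) (n : ℕ) (y : ℝ) : ℂ :=
  (y : ℂ) ^ n * Complex.exp (Complex.I * (q : ℂ) * y - (y : ℂ) ^ 2)

lemma gInt_integrable (q : ℝ) (n : ℕ) : Integrable (gInt q n) := by
  have h := integrable_rpow_mul_exp_neg_mul_sq (b := 1) one_pos (s := n)
    (by have : (0 : ℝ) ≤ n := n.cast_nonneg
        linarith)
  refine h.mono (by unfold gInt; exact Continuous.aestronglyMeasurable (by fun_prop)) ?_
  filter_upwards with y
  simp [gInt, Complex.norm_exp, ← Complex.ofReal_pow]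

lemma gInt_zero (q : ℝ) : ∫ y, gInt q 0 y = (Real.sqrt π : ℂ) * Complex.exp (-(q : ℂ) ^ 2 / 4) := by
  have h := fourierIntegral_gaussian (b := 1) (by simp) (q : ℂ)
  have h2 : ((Real.sqrt π : ℝ) : ℂ) = (π / 1 : ℂ) ^ (1 / 2 : ℂ) := by
    rw [Real.sqrt_eq_rpow, Complex.ofReal_cpow Real.pi_pos.le]; simp
  rw [h2]
  rw [mul_one] at h
  rw [← h]
  congr 1
  ext y
  rw [gInt, ← Complex.exp_add]
  simp [sub_eq_add_neg]

lemma gInt_rec (q : ℝ) (n : ℕ) :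
    ∫ y, gInt q (n + 1) y = Complex.I * q / 2 * (∫ y, gInt q n y)
      + (n : ℂ) / 2 * (∫ y, gInt q (n - 1) y) := by
  have key : ∫ y, ((n : ℂ) * gInt q (n - 1) y + Complex.I * q * gInt q n y
      - 2 * gInt q (n + 1) y) = 0 := by
    refine integral_eq_zero_of_hasDerivAt_of_integrable (f := gInt q n) ?_ ?_ (gInt_integrable q n)
    · intro y
      have h0 : HasDerivAt (fun y : ℝ => (y : ℂ)) 1 y := Complex.ofRealCLM.hasDerivAt
      have h1 := h0.pow n
      have h2 := ((h0.const_mul (Complex.I * (q : ℂ))).sub (h0.pow 2)).cexp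
      have h3 := h1.mul h2
      refine HasDerivAt.congr_deriv (f := gInt q n) h3 ?_
      simp [gInt]
      ring
    · exact (((gInt_integrable q (n - 1)).const_mul _).add
        ((gInt_integrable q n).const_mul _)).sub ((gInt_integrable q (n + 1)).const_mul _)
  rw [integral_sub, integral_add, integral_const_mul, integral_const_mul, integral_const_mul] at key
  · linear_combination (-1 / 2 : ℂ) * key
  · exact (gInt_integrable q (n - 1)).const_mul _
  · exact (gInt_integrable q n).const_mul _
  · exact ((gInt_integrable q (n - 1)).const_mul _).add
        ((gInt_integrable q n).const_mul _)
  · exact (gInt_integrable q (n + 1)).const_mul _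

lemma gInt_eq (q : ℝ) (n : ℕ) :
    ∫ y, gInt q n y = (Real.sqrt π : ℂ) * Complex.exp (-(q : ℂ) ^ 2 / 4)
      * (hermH n).eval (q : ℂ) := by
  induction n using hermH.induct with
  | case1 => simp [hermH, gInt_zero]
  | case2 =>
    rw [show (1 : ℕ) = 0 + 1 from rfl, gInt_rec, gInt_zero]
    simp [hermH]
    ring
  | case3 n ih1 ih0 =>
    change ∫ y, gInt q ((n + 1) + 1) y = _
    rw [gInt_rec, Nat.add_sub_cancel, ih1, ih0, hermH]
    simp
    ring

lemma coeff_prod_aeval {ι : Type*} [Fintype ι] [DecidableEq ι] (f : ι → Polynomial ℂ) (m : ι →₀ ℕ) :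
    MvPolynomial.coeff m (∏ i, Polynomial.aeval (MvPolynomial.X i : MvPolynomial ι ℂ) (f i))
      = ∏ i, (f i).coeff (m i) := by
  have h1 : ∀ i, Polynomial.aeval (MvPolynomial.X i : MvPolynomial ι ℂ) (f i)
      = ∑ k ∈ Finset.range ((f i).natDegree + m i + 1),
        MvPolynomial.C ((f i).coeff k) * (MvPolynomial.X i) ^ k := by
    intro i
    rw [Polynomial.aeval_eq_sum_range' (n := (f i).natDegree + m i + 1) (by omega)]
    simp [MvPolynomial.smul_eq_C_mul]
  simp_rw [h1]
  rw [Finset.prod_univ_sum, MvPolynomial.coeff_sum]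
  have h2 : ∀ k : ι → ℕ, (∏ i, (MvPolynomial.C ((f i).coeff (k i)) *
      (MvPolynomial.X i : MvPolynomial ι ℂ) ^ k i))
      = MvPolynomial.monomial (Finsupp.equivFunOnFinite.symm k) (∏ i, (f i).coeff (k i)) := by
    intro k
    rw [Finset.prod_mul_distrib, MvPolynomial.monomial_eq, map_prod, Finsupp.prod_fintype]
    · simp
    · simp
  simp_rw [h2, MvPolynomial.coeff_monomial]
  rw [Finset.sum_eq_single (m : ι → ℕ)]
  · simp
  · intro b _ hb
    rw [if_neg]
    rintro rfl
    exact hb (by simp)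
  · intro hm
    exfalso
    apply hm
    simp [Fintype.mem_piFinset]

/-- Hermite transform. -/
noncomputable def hermL {ι : Type*} [Fintype ι] (R : MvPolynomial ι ℂ) : MvPolynomial ι ℂ :=
  ∑ m ∈ R.support, MvPolynomial.C (R.coeff m) *
    ∏ i, Polynomial.aeval (MvPolynomial.X i : MvPolynomial ι ℂ) (hermH (m i))

lemma hermL_coeff {ι : Type*} [Fintype ι] [DecidableEq ι] (R : MvPolynomial ι ℂ) (m : ι →₀ ℕ) :
    (hermL R).coeff m = ∑ m' ∈ R.support, R.coeff m' * ∏ i, (hermH (m' i)).coeff (m i) := by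
  simp [hermL, MvPolynomial.coeff_sum, MvPolynomial.coeff_C_mul, coeff_prod_aeval]

lemma hermH_prod_ne {ι : Type*} [Fintype ι] (m m' : ι →₀ ℕ)
    (h : ∏ i, (hermH (m' i)).coeff (m i) ≠ 0) : m ≤ m' := by
  intro i
  by_contra hc
  apply h
  refine Finset.prod_eq_zero (Finset.mem_univ i) ?_
  exact Polynomial.coeff_eq_zero_of_natDegree_lt (lt_of_le_of_lt (hermH_spec _).1 (not_le.1 hc))

lemma hermL_degree {ι : Type*} [Fintype ι] [DecidableEq ι] (R : MvPolynomial ι ℂ) :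
    (hermL R).totalDegree = R.totalDegree := by
  apply le_antisymm
  · refine Finset.sup_le fun m hm => ?_
    rw [MvPolynomial.mem_support_iff, hermL_coeff] at hm
    obtain ⟨m', hm', hne⟩ := Finset.exists_ne_zero_of_sum_ne_zero hm
    have hle := hermH_prod_ne m m' (right_ne_zero_of_mul hne)
    refine le_trans ?_ (MvPolynomial.le_totalDegree hm')
    rw [Finsupp.sum_fintype _ _ (by simp), Finsupp.sum_fintype _ _ (by simp)]
    exact Finset.sum_le_sum fun i _ => hle i
  · by_cases hR : R = 0
    · simp [hR]
    obtain ⟨m, hm, hmd⟩ := Finset.exists_mem_eq_sup R.support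
      (MvPolynomial.support_nonempty.2 hR) (fun s => s.sum fun _ e => e)
    change R.totalDegree = _ at hmd
    rw [hmd]
    refine MvPolynomial.le_totalDegree (s := m) ?_
    rw [MvPolynomial.mem_support_iff, hermL_coeff, Finset.sum_eq_single m]
    · refine mul_ne_zero (MvPolynomial.mem_support_iff.1 hm) (Finset.prod_ne_zero_iff.2 ?_)
      intro i _
      rw [(hermH_spec _).2]
      exact pow_ne_zero _ (by simp)
    · intro b hb hbm
      by_contra hne
      have hle := hermH_prod_ne m b (right_ne_zero_of_mul hne)
      have h1 := MvPolynomial.le_totalDegree hb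
      rw [hmd, Finsupp.sum_fintype _ _ (by simp), Finsupp.sum_fintype _ _ (by simp)] at h1
      apply hbm
      have h2 : ∑ i, m i = ∑ i, b i := le_antisymm (Finset.sum_le_sum fun i _ => hle i) h1
      have h3 := (Finset.sum_eq_sum_iff_of_le (fun i _ => hle i)).1 h2
      ext i
      exact (h3 i (Finset.mem_univ i)).symm
    · intro h; exact absurd hm h

lemma hermL_integral {ι : Type*} [Fintype ι] [DecidableEq ι] (R : MvPolynomial ι ℂ) (q : ι → ℝ) :
    ∫ y : ι → ℝ, Complex.exp (∑ i, (Complex.I * (q i : ℂ) * y i - (y i : ℂ) ^ 2)) *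
      MvPolynomial.eval (fun i => (y i : ℂ)) R
    = (Real.sqrt π : ℂ) ^ (Fintype.card ι) * Complex.exp (- (∑ i, (q i : ℂ) ^ 2) / 4)
      * MvPolynomial.eval (fun i => (q i : ℂ)) (hermL R) := by
  have h1 : ∀ y : ι → ℝ, Complex.exp (∑ i, (Complex.I * (q i : ℂ) * y i - (y i : ℂ) ^ 2)) *
      MvPolynomial.eval (fun i => (y i : ℂ)) R
      = ∑ m ∈ R.support, R.coeff m * ∏ i, gInt (q i) (m i) (y i) := by
    intro y
    rw [MvPolynomial.eval_eq', Complex.exp_sum, Finset.mul_sum]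
    refine Finset.sum_congr rfl fun m _ => ?_
    simp only [gInt, Finset.prod_mul_distrib]
    ring
  simp_rw [h1]
  rw [integral_finsetSum]
  · simp_rw [integral_const_mul, integral_fintype_prod_volume_eq_prod, gInt_eq, hermL]
    rw [map_sum, Finset.mul_sum]
    refine Finset.sum_congr rfl fun m _ => ?_
    rw [Finset.prod_mul_distrib, Finset.prod_mul_distrib, Finset.prod_const, ← Complex.exp_sum,
      map_mul, map_prod, MvPolynomial.eval_C, Finset.card_univ, neg_div, Finset.sum_div,
      ← Finset.sum_neg_distrib]
    have : ∀ i, MvPolynomial.eval (fun i => (q i : ℂ))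
      (Polynomial.aeval (MvPolynomial.X i : MvPolynomial ι ℂ) (hermH (m i)))
      = (hermH (m i)).eval (q i : ℂ) := by
      intro i
      rw [← MvPolynomial.coe_aeval_eq_eval, RingHom.coe_coe, ← Polynomial.aeval_algHom_apply,
        MvPolynomial.aeval_X, Polynomial.coe_aeval_eq_eval]
    simp_rw [this, neg_div]
    ring
  · intro m _
    exact (Integrable.fintype_prod (f := fun i => gInt (q i) (m i))
      (fun i => gInt_integrable _ _)).const_mul _

/-- Affine substitution. -/
noncomputable def affSub {ι : Type*} [Fintype ι] (A : Matrix ι ι ℂ) (b : ι → ℂ)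
    (P : MvPolynomial ι ℂ) : MvPolynomial ι ℂ :=
  MvPolynomial.aeval (fun i => ∑ j, MvPolynomial.C (A i j) * MvPolynomial.X j + MvPolynomial.C (b i)) P

lemma affSub_eval {ι : Type*} [Fintype ι] (A : Matrix ι ι ℂ) (b : ι → ℂ)
    (P : MvPolynomial ι ℂ) (x : ι → ℂ) :
    MvPolynomial.eval x (affSub A b P) = MvPolynomial.eval (A *ᵥ x + b) P := by
  unfold affSub
  rw [MvPolynomial.aeval_def, MvPolynomial.algebraMap_eq, MvPolynomial.eval_eval₂]
  rw [← MvPolynomial.eval₂_id]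
  congr 1
  · ext; simp
  · ext i; simp [Matrix.mulVec, dotProduct]

lemma affSub_degree_le {ι : Type*} [Fintype ι] (A : Matrix ι ι ℂ) (b : ι → ℂ)
    (P : MvPolynomial ι ℂ) : (affSub A b P).totalDegree ≤ P.totalDegree := by
  unfold affSub
  rw [MvPolynomial.aeval_def, MvPolynomial.eval₂_eq']
  refine MvPolynomial.totalDegree_finsetSum_le fun m hm => ?_
  refine le_trans ?_ (MvPolynomial.le_totalDegree hm)
  rw [Finsupp.sum_fintype _ _ (by simp)]
  refine (MvPolynomial.totalDegree_mul _ _).trans ?_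
  rw [MvPolynomial.algebraMap_eq, MvPolynomial.totalDegree_C, zero_add]
  refine (MvPolynomial.totalDegree_finsetProd _ _).trans (Finset.sum_le_sum fun i _ => ?_)
  refine (MvPolynomial.totalDegree_pow _ _).trans ?_
  have : (∑ j, MvPolynomial.C (A i j) * MvPolynomial.X j + MvPolynomial.C (b i) :
      MvPolynomial ι ℂ).totalDegree ≤ 1 := by
    refine (MvPolynomial.totalDegree_add _ _).trans (max_le ?_ (by simp))
    refine MvPolynomial.totalDegree_finsetSum_le fun j _ => ?_
    refine (MvPolynomial.totalDegree_mul _ _).trans (by simp)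
  nlinarith

lemma affSub_degree {ι : Type*} [Fintype ι] [DecidableEq ι] (A B : Matrix ι ι ℂ) (hAB : A * B = 1)
    (b : ι → ℂ)
    (P : MvPolynomial ι ℂ) : (affSub A b P).totalDegree = P.totalDegree := by
  refine le_antisymm (affSub_degree_le A b P) ?_
  have : P = affSub B (- B *ᵥ b) (affSub A b P) := by
    apply MvPolynomial.funext
    intro x
    rw [affSub_eval, affSub_eval]
    congr 2
    simp [Matrix.mulVec_add, Matrix.mulVec_neg, Matrix.neg_mulVec, hAB]
  conv_lhs => rw [this]
  exact affSub_degree_le _ _ _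

lemma integral_comp_matrix {ι : Type*} [Fintype ι] [DecidableEq ι] (A : Matrix ι ι ℝ)
    (hA : A.det ≠ 0) (f : (ι → ℝ) → ℂ) (hf : Continuous f) :
    ∫ x, f x = ((|A.det| : ℝ) : ℂ) * ∫ y, f (A *ᵥ y) := by
  have h := Real.map_matrix_volume_pi_eq_smul_volume_pi hA
  have hc : Continuous (toLin' A) := LinearMap.continuous_of_finiteDimensional _
  have h1 : ∫ y, f (A *ᵥ y) = ∫ x, f x ∂(Measure.map (toLin' A) volume) := by
    rw [integral_map hc.aemeasurable hf.aestronglyMeasurable]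
    simp
  rw [h1, h, integral_smul_measure, ENNReal.toReal_ofReal (abs_nonneg _), Complex.real_smul,
    ← mul_assoc, ← Complex.ofReal_mul, abs_inv, mul_inv_cancel₀ (abs_ne_zero.2 hA)]
  simp

lemma exists_factor (d : ℕ) (M : Matrix (Fin (2 * d)) (Fin (2 * d)) ℝ)
    (hM : M.PosDef) (t : ℝ) (ht : 0 < t) : ∃ A : Matrix (Fin (2 * d)) (Fin (2 * d)) ℝ,
    t • (Aᵀ * M * A) = 1 ∧ A * Aᵀ = t⁻¹ • M⁻¹ ∧ A.det ≠ 0 ∧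
      |A.det| = (t ^ d)⁻¹ * (Real.sqrt M.det)⁻¹ := by
  obtain ⟨B, hB, hMB⟩ : ∃ B : Matrix (Fin (2 * d)) (Fin (2 * d)) ℝ, IsUnit B ∧ M = Bᵀ * B := by
    open scoped MatrixOrder Matrix.Norms.L2Operator in
    obtain ⟨B, hB, h⟩ :=
      CStarAlgebra.isStrictlyPositive_iff_eq_star_mul_self.mp hM.isStrictlyPositive
    exact ⟨B, hB, by rw [h, star_eq_conjTranspose, conjTranspose_eq_transpose_of_trivial]⟩
  have hd : IsUnit B.det := (Matrix.isUnit_iff_isUnit_det B).1 hB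
  have hdT : IsUnit Bᵀ.det := by rwa [Matrix.det_transpose]
  have hs : (Real.sqrt t)⁻¹ * (Real.sqrt t)⁻¹ = t⁻¹ := by
    rw [← mul_inv, Real.mul_self_sqrt ht.le]
  have hdet : |((Real.sqrt t)⁻¹ • B⁻¹).det| = (t ^ d)⁻¹ * (Real.sqrt M.det)⁻¹ := by
    rw [Matrix.det_smul, Fintype.card_fin, pow_mul, pow_two, hs, abs_mul,
      abs_of_nonneg (by positivity), inv_pow, hMB, Matrix.det_mul, Matrix.det_transpose,
      Real.sqrt_mul_self_eq_abs, Matrix.det_nonsing_inv, Ring.inverse_eq_inv', abs_inv]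
  refine ⟨(Real.sqrt t)⁻¹ • B⁻¹, ?_, ?_, ?_, hdet⟩
  · rw [hMB, Matrix.transpose_smul, Matrix.smul_mul, Matrix.smul_mul, Matrix.mul_smul, smul_smul,
      smul_smul, mul_assoc, hs, mul_inv_cancel₀ ht.ne', one_smul, Matrix.transpose_nonsing_inv,
      ← Matrix.mul_assoc, Matrix.nonsing_inv_mul _ hdT, Matrix.one_mul, Matrix.mul_nonsing_inv _ hd]
  · rw [hMB, Matrix.transpose_smul, Matrix.smul_mul, Matrix.mul_smul, smul_smul, hs,
      Matrix.mul_inv_rev, Matrix.transpose_nonsing_inv]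
  · rw [← abs_ne_zero, hdet]
    have := hM.det_pos
    positivity

/-- the Fourier transform of
`x ↦ e^{i⟨x,h⟩} e^{−tQ(x)} P(x)` on `ℝ^{2d}` equals
`p ↦ t^{−d} π^d Disc(Q)^{−1/2} exp(−(π²/t) Q^∨(p+h)) P̂(p)` with `P̂` a
polynomial of the same degree as `P` (for `P = 1` this is the Gaussian
transformation formula). -/
theorem stmt16 (d : ℕ) (hd : 0 < d) (M : Matrix (Fin (2 * d)) (Fin (2 * d)) ℝ)
    (hM : M.PosDef) (t : ℝ) (ht : 0 < t) (P : MvPolynomial (Fin (2 * d)) ℂ)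
    (h : Fin (2 * d) → ℝ) :
    ∃ Ph : MvPolynomial (Fin (2 * d)) ℂ, Ph.totalDegree = P.totalDegree ∧
      ∀ p : Fin (2 * d) → ℝ,
        (∫ x : Fin (2 * d) → ℝ,
          Complex.exp (Complex.I * ∑ i, (x i : ℂ) * ((h i : ℂ) + (p i : ℂ))) *
            Complex.exp (-(t * Qform (2 * d) M x : ℝ) : ℂ) *
            MvPolynomial.eval (fun i => (x i : ℂ)) P) =
        (t : ℂ) ^ (-(d : ℤ)) * (π : ℂ) ^ d * (M.det : ℂ) ^ (-(1 / 2 : ℂ)) *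
          Complex.exp (-((π ^ 2 / t) * Qdual (2 * d) M (fun i => p i + h i) : ℝ) : ℂ) *
          MvPolynomial.eval (fun i => (p i : ℂ)) Ph := by
  classical
  obtain ⟨A, hA1, hA2, hA3, hA4⟩ := exists_factor d M hM t ht
  have hdet := hM.det_pos
  set A' : Matrix (Fin (2 * d)) (Fin (2 * d)) ℂ := A.map (fun r : ℝ => (r : ℂ)) with hA'
  have hinv : A' * (A⁻¹).map (fun r : ℝ => (r : ℂ)) = 1 := by
    have h1 := Matrix.mul_nonsing_inv A (isUnit_iff_ne_zero.2 hA3)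
    have h2 := congrArg (fun X : Matrix _ _ ℝ => X.map (Complex.ofRealHom)) h1
    simp only [Matrix.map_mul] at h2
    rw [Matrix.map_one _ (map_zero _) (map_one _)] at h2
    exact h2
  have hinvT : A'ᵀ * ((A⁻¹).map (fun r : ℝ => (r : ℂ)))ᵀ = 1 := by
    rw [← Matrix.transpose_mul, mul_eq_one_comm.1 hinv, Matrix.transpose_one]
  have hmv : ∀ (X : Matrix (Fin (2 * d)) (Fin (2 * d)) ℝ) (y : Fin (2 * d) → ℝ),
      (fun i => ((X *ᵥ y) i : ℂ)) = X.map (fun r : ℝ => (r : ℂ)) *ᵥ (fun i => (y i : ℂ)) := by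
    intro X y
    ext i
    simp [Matrix.mulVec, dotProduct]
  refine ⟨affSub A'ᵀ (A'ᵀ *ᵥ (fun i => (h i : ℂ))) (hermL (affSub A' 0 P)), ?_, ?_⟩
  · rw [affSub_degree _ _ hinvT, hermL_degree, affSub_degree _ _ hinv]
  intro p
  rw [integral_comp_matrix A hA3]
  swap
  · have h1 : Continuous fun x : Fin (2 * d) → ℝ => Qform (2 * d) M x := by
      unfold Qform
      simp only [Matrix.mulVec, dotProduct]
      fun_prop
    have h2 : Continuous fun x : Fin (2 * d) → ℝ =>
        MvPolynomial.eval (fun i => (x i : ℂ)) P := by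
      simp only [MvPolynomial.eval_eq']
      fun_prop
    fun_prop
  set q : Fin (2 * d) → ℝ := Aᵀ *ᵥ (p + h) with hq
  have hint : ∀ y : Fin (2 * d) → ℝ,
      Complex.exp (Complex.I * ∑ i, ((A *ᵥ y) i : ℂ) * ((h i : ℂ) + (p i : ℂ))) *
            Complex.exp (-(t * Qform (2 * d) M (A *ᵥ y) : ℝ) : ℂ) *
            MvPolynomial.eval (fun i => ((A *ᵥ y) i : ℂ)) P
      = Complex.exp (∑ i, (Complex.I * (q i : ℂ) * y i - (y i : ℂ) ^ 2)) *
      MvPolynomial.eval (fun i => (y i : ℂ)) (affSub A' 0 P) := by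
    intro y
    rw [affSub_eval, add_zero, hmv, ← Complex.exp_add]
    congr 2
    have e1 : (A *ᵥ y) ⬝ᵥ (p + h) = q ⬝ᵥ y := by
      rw [hq, Matrix.mulVec_transpose, ← Matrix.dotProduct_mulVec, dotProduct_comm]
    have e2 : t * Qform (2 * d) M (A *ᵥ y) = y ⬝ᵥ y := by
      have : y ⬝ᵥ ((t • (Aᵀ * M * A)) *ᵥ y) = y ⬝ᵥ y := by rw [hA1, Matrix.one_mulVec]
      rw [← this, Qform, Matrix.smul_mulVec, dotProduct_smul, smul_eq_mul,
        ← Matrix.mulVec_mulVec, ← Matrix.mulVec_mulVec, Matrix.dotProduct_mulVec y Aᵀ,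
        Matrix.vecMul_transpose]
    rw [e2]
    have e3 : ∑ i, ((A *ᵥ y) i : ℂ) * ((h i : ℂ) + (p i : ℂ)) = ((q ⬝ᵥ y : ℝ) : ℂ) := by
      rw [← e1]
      simp [dotProduct, add_comm]
    rw [e3]
    simp only [dotProduct, Complex.ofReal_sum, Complex.ofReal_mul, Finset.mul_sum,
      Finset.sum_sub_distrib, mul_assoc, pow_two]
    rw [← sub_eq_add_neg]
  simp_rw [hint]
  rw [hermL_integral, affSub_eval, hA4]
  have e4 : A'ᵀ *ᵥ (fun i => (p i : ℂ)) + A'ᵀ *ᵥ (fun i => (h i : ℂ)) = fun i => (q i : ℂ) := by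
    rw [hq, hmv, ← Matrix.mulVec_add, hA', Matrix.transpose_map]
    congr 1
    ext i; simp
  rw [e4]
  have e5 : (-(∑ i, (q i : ℂ) ^ 2) / 4)
      = (-((π ^ 2 / t) * Qdual (2 * d) M (fun i => p i + h i) : ℝ) : ℂ) := by
    have e6 : q ⬝ᵥ q = t⁻¹ * ((p + h) ⬝ᵥ M⁻¹ *ᵥ (p + h)) := by
      have : (p + h) ⬝ᵥ ((A * Aᵀ) *ᵥ (p + h)) = t⁻¹ * ((p + h) ⬝ᵥ M⁻¹ *ᵥ (p + h)) := by
        rw [hA2, Matrix.smul_mulVec, dotProduct_smul, smul_eq_mul]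
      rw [← this, ← Matrix.mulVec_mulVec, Matrix.dotProduct_mulVec (p + h) A,
        ← Matrix.mulVec_transpose]
    have e7 : (∑ i, (q i : ℂ) ^ 2) = ((q ⬝ᵥ q : ℝ) : ℂ) := by
      simp [dotProduct, pow_two]
    rw [e7, e6, Qdual]
    change _ = (-((π ^ 2 / t) * (1 / (4 * π ^ 2) * ((p + h) ⬝ᵥ M⁻¹ *ᵥ (p + h))) : ℝ) : ℂ)
    rw [← Complex.ofReal_neg, ← Complex.ofReal_neg]
    have hpi := Real.pi_ne_zero
    rw [show (4 : ℂ) = ((4 : ℝ) : ℂ) by norm_num, ← Complex.ofReal_div]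
    congr 1
    field_simp
  rw [e5]
  have e8 : ((Real.sqrt π : ℝ) : ℂ) ^ Fintype.card (Fin (2 * d)) = (π : ℂ) ^ d := by
    rw [Fintype.card_fin, pow_mul, ← Complex.ofReal_pow, Real.sq_sqrt Real.pi_pos.le]
  have e9 : (M.det : ℂ) ^ (-(1 / 2 : ℂ)) = (((Real.sqrt M.det)⁻¹ : ℝ) : ℂ) := by
    rw [Real.sqrt_eq_rpow, ← Real.rpow_neg hdet.le, Complex.ofReal_cpow hdet.le]
    simp
  rw [e8, e9]
  simp only [_root_.zpow_neg, zpow_natCast, Complex.ofReal_mul, Complex.ofReal_inv, Complex.ofReal_pow]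
  ring
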